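/- arXiv:1905.04758 — 5 statements merged into one kernel-verified Lean document; each statement's English description precedes it below -/
import Mathlib

section
/- Suppose A has the geometric distribution with parameter 0 < p < 1, i.e., ℙ[A = k] = (1−p)^k · p for k ∈ ℕ. Then E[X²] < ∞ if and only if p > 2/3, and in that case Var(X) = −(p − 1)p² / ((1 − 2p)² (3p − 2)). -/
open MeasureTheory ProbabilityTheory ENNReal

/-!
Multiplying by an independent `A` multiplies `r`-th moments, so `E[X^r] = E[(A X + 1)^r]`, being
larger than `E[A^r] E[X^r]`, can be finite only if `E[A^r] < 1`. Conversely, a value of `A` is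
either `0` or at least `1`, hence `min (A X + 1) n ≤ A * min X n + 1`, and Minkowski's inequality
gives `‖min X n‖ᵣ ≤ ‖A‖ᵣ ‖min X n‖ᵣ + 1`: if `‖A‖ᵣ < 1`, this bounds `‖min X n‖ᵣ` uniformly
in `n`.

Once `E[X²]` is finite, the fixed-point equation becomes a linear system for the mean and the
variance of `X`. For the geometric law, `E[A²] = (1 - p)(2 - p) / p²`, which is less than `1`
exactly when `2 / 3 < p`.
-/

lemma le_inv_one_sub_of_le_mul_add_one {a x : ℝ≥0∞} (hx : x ≠ ⊤) (h : x ≤ a * x + 1) :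
    x ≤ (1 - a)⁻¹ := by
  rw [ENNReal.le_inv_iff_mul_le, ENNReal.mul_sub (fun _ _ ↦ hx), mul_one, tsub_le_iff_left,
    mul_comm x a]
  exact h

section Integrals

variable {Ω : Type*} [MeasurableSpace Ω] {P : Measure Ω}

lemma lintegral_mul_rpow_of_indepFun {f g : Ω → ℝ≥0∞} {r : ℝ} (hr : 0 ≤ r)
    (hf : AEMeasurable f P) (hg : AEMeasurable g P) (hfg : IndepFun f g P) :
    ∫⁻ ω, (f ω * g ω) ^ r ∂P = (∫⁻ ω, f ω ^ r ∂P) * ∫⁻ ω, g ω ^ r ∂P := by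
  have hpow : Measurable fun x : ℝ≥0∞ ↦ x ^ r := by fun_prop
  simp_rw [ENNReal.mul_rpow_of_nonneg _ _ hr]
  exact lintegral_mul_eq_lintegral_mul_lintegral_of_indepFun'' (hf.pow_const r) (hg.pow_const r)
    (hfg.comp hpow hpow)

lemma lintegral_rpow_natCast_eq_iSup_min {X : Ω → ℕ} (hX : AEMeasurable X P) {r : ℝ}
    (hr : 0 ≤ r) :
    ∫⁻ ω, (X ω : ℝ≥0∞) ^ r ∂P = ⨆ n : ℕ, ∫⁻ ω, ((min (X ω) n : ℕ) : ℝ≥0∞) ^ r ∂P := by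
  have hmono (x : ℕ) : Monotone fun n : ℕ ↦ ((min x n : ℕ) : ℝ≥0∞) ^ r := fun m n hmn ↦ by
    dsimp only
    gcongr
  have hsup (x : ℕ) : (x : ℝ≥0∞) ^ r = ⨆ n : ℕ, ((min x n : ℕ) : ℝ≥0∞) ^ r := by
    refine le_antisymm (le_iSup_of_le x (by rw [min_self])) (iSup_le fun n ↦ ?_)
    gcongr
    exact min_le_left x n
  rw [lintegral_congr fun ω ↦ hsup (X ω)]
  exact lintegral_iSup' (fun n ↦ (Measurable.of_discrete (f := fun x : ℕ ↦
    ((min x n : ℕ) : ℝ≥0∞) ^ r)).comp_aemeasurable hX) (ae_of_all _ fun ω ↦ hmono (X ω))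

lemma lintegral_enorm_sq_sub_sq_lintegral_enorm_eq_ofReal_variance [IsProbabilityMeasure P]
    {f : Ω → ℝ} (hf0 : 0 ≤ᵐ[P] f) (hf : MemLp f 2 P) :
    (∫⁻ ω, ‖f ω‖ₑ ^ 2 ∂P) - (∫⁻ ω, ‖f ω‖ₑ ∂P) ^ 2 = ENNReal.ofReal Var[f; P] := by
  have hnorm : ∫ ω, ‖f ω‖ ∂P = ∫ ω, f ω ∂P :=
    integral_congr_ae (hf0.mono fun ω hω ↦ Real.norm_of_nonneg hω)
  rw [ofReal_variance hf, evariance_def' hf.aestronglyMeasurable,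
    ENNReal.ofReal_pow (integral_nonneg_of_ae hf0), ← hnorm,
    ofReal_integral_norm_eq_lintegral_enorm (hf.integrable one_le_two)]

end Integrals

section FixedPoint

variable {Ω : Type*} [MeasurableSpace Ω] {P : Measure Ω} [IsProbabilityMeasure P]

lemma lintegral_rpow_lt_one_of_identDistrib_mul_add_one {A X : Ω → ℝ≥0∞}
    (hA : AEMeasurable A P) (hAX : IndepFun A X P)
    (hfix : IdentDistrib X (fun ω ↦ A ω * X ω + 1) P P) {r : ℝ} (hr : 0 < r)
    (hXr : ∫⁻ ω, X ω ^ r ∂P < ⊤) : ∫⁻ ω, A ω ^ r ∂P < 1 := by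
  have hX := hfix.aemeasurable_fst
  have hpow_eq : ∫⁻ ω, X ω ^ r ∂P = ∫⁻ ω, (A ω * X ω + 1) ^ r ∂P :=
    (hfix.comp (u := fun x ↦ x ^ r) (by fun_prop)).lintegral_eq
  have hle : ∫⁻ ω, (A ω * X ω) ^ r ∂P ≤ ∫⁻ ω, X ω ^ r ∂P := by
    rw [hpow_eq]
    gcongr
    exact le_self_add
  have hfinite : ∀ᵐ ω ∂P, (A ω * X ω) ^ r < ⊤ :=
    ae_lt_top' (by fun_prop) (hle.trans_lt hXr).ne
  have hlt : (∫⁻ ω, A ω ^ r ∂P) * ∫⁻ ω, X ω ^ r ∂P < ∫⁻ ω, X ω ^ r ∂P := by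
    rw [← lintegral_mul_rpow_of_indepFun hr.le hA hX hAX, hpow_eq]
    refine lintegral_strict_mono (IsProbabilityMeasure.ne_zero P) (by fun_prop)
      (hle.trans_lt hXr).ne ?_
    filter_upwards [hfinite] with ω hω
    exact ENNReal.rpow_lt_rpow
      (ENNReal.lt_add_right ((ENNReal.rpow_lt_top_iff_of_pos hr).1 hω).ne one_ne_zero) hr
  by_contra! hge
  exact hlt.not_ge (le_mul_of_one_le_left zero_le hge)

lemma min_mul_add_one_le (a x n : ℕ) : min (a * x + 1) n ≤ a * min x n + 1 := by
  rcases Nat.eq_zero_or_pos a with rfl | ha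
  · simp
  · rw [← Nat.mul_min_mul_left]
    have hn : n ≤ a * n := Nat.le_mul_of_pos_left n ha
    omega

lemma lintegral_rpow_min_le_of_identDistrib_mul_add_one {A X : Ω → ℕ}
    (hA : AEMeasurable A P) (hAX : IndepFun A X P)
    (hfix : IdentDistrib X (fun ω ↦ A ω * X ω + 1) P P) {r : ℝ} (hr : 1 ≤ r) (n : ℕ) :
    (∫⁻ ω, ((min (X ω) n : ℕ) : ℝ≥0∞) ^ r ∂P) ^ (1 / r) ≤
      (1 - (∫⁻ ω, (A ω : ℝ≥0∞) ^ r ∂P) ^ (1 / r))⁻¹ := by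
  have hr0 : 0 < r := one_pos.trans_le hr
  set Y : Ω → ℝ≥0∞ := fun ω ↦ ((min (X ω) n : ℕ) : ℝ≥0∞)
  have hcast : Measurable (Nat.cast : ℕ → ℝ≥0∞) := by fun_prop
  have htrunc : Measurable fun x : ℕ ↦ ((min x n : ℕ) : ℝ≥0∞) := Measurable.of_discrete
  have hA' : AEMeasurable (fun ω ↦ (A ω : ℝ≥0∞)) P := hcast.comp_aemeasurable hA
  have hY : AEMeasurable Y P := htrunc.comp_aemeasurable hfix.aemeasurable_fst
  have hAY : IndepFun (fun ω ↦ (A ω : ℝ≥0∞)) Y P := hAX.comp hcast htrunc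
  have hY_finite : ∫⁻ ω, Y ω ^ r ∂P < ⊤ := by
    refine (lintegral_mono (g := fun _ ↦ (n : ℝ≥0∞) ^ r) fun ω ↦ ?_).trans_lt
      (by simpa using ENNReal.rpow_lt_top_of_nonneg hr0.le (by simp))
    dsimp only [Y]
    gcongr
    exact min_le_right _ _
  refine le_inv_one_sub_of_le_mul_add_one
    (ENNReal.rpow_lt_top_of_nonneg (by positivity) hY_finite.ne).ne ?_
  calc (∫⁻ ω, Y ω ^ r ∂P) ^ (1 / r)
      = (∫⁻ ω, ((min (A ω * X ω + 1) n : ℕ) : ℝ≥0∞) ^ r ∂P) ^ (1 / r) :=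
        congrArg (· ^ (1 / r))
          (hfix.comp (u := fun x ↦ ((min x n : ℕ) : ℝ≥0∞) ^ r) .of_discrete).lintegral_eq
    _ ≤ (∫⁻ ω, (A ω * Y ω + 1) ^ r ∂P) ^ (1 / r) := by
        gcongr with ω
        dsimp only [Y]
        exact mod_cast min_mul_add_one_le (A ω) (X ω) n
    _ ≤ (∫⁻ ω, (A ω * Y ω) ^ r ∂P) ^ (1 / r) + (∫⁻ _, 1 ^ r ∂P) ^ (1 / r) :=
        ENNReal.lintegral_Lp_add_le (hA'.mul hY) aemeasurable_const hr
    _ = (∫⁻ ω, (A ω : ℝ≥0∞) ^ r ∂P) ^ (1 / r) * (∫⁻ ω, Y ω ^ r ∂P) ^ (1 / r) + 1 := by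
        rw [lintegral_mul_rpow_of_indepFun hr0.le hA' hY hAY,
          ENNReal.mul_rpow_of_nonneg _ _ (by positivity)]
        simp

theorem lintegral_rpow_lt_top_iff_of_identDistrib_mul_add_one {A X : Ω → ℕ}
    (hA : AEMeasurable A P) (hAX : IndepFun A X P)
    (hfix : IdentDistrib X (fun ω ↦ A ω * X ω + 1) P P) {r : ℝ} (hr : 1 ≤ r) :
    ∫⁻ ω, (X ω : ℝ≥0∞) ^ r ∂P < ⊤ ↔ ∫⁻ ω, (A ω : ℝ≥0∞) ^ r ∂P < 1 := by
  have hr0 : 0 < r := one_pos.trans_le hr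
  have hcast : Measurable (Nat.cast : ℕ → ℝ≥0∞) := by fun_prop
  refine ⟨fun hXr ↦ lintegral_rpow_lt_one_of_identDistrib_mul_add_one
    (hcast.comp_aemeasurable hA) (hAX.comp hcast hcast)
    (by simpa [Function.comp_def] using hfix.comp hcast) hr0 hXr, fun hAr ↦ ?_⟩
  have hnorm : (∫⁻ ω, (A ω : ℝ≥0∞) ^ r ∂P) ^ (1 / r) < 1 := ENNReal.rpow_lt_one hAr (by positivity)
  have hbound : (1 - (∫⁻ ω, (A ω : ℝ≥0∞) ^ r ∂P) ^ (1 / r))⁻¹ < ⊤ :=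
    ENNReal.inv_lt_top.2 (tsub_pos_of_lt hnorm)
  rw [lintegral_rpow_natCast_eq_iSup_min hfix.aemeasurable_fst hr0.le]
  refine (iSup_le fun n ↦ ?_).trans_lt (ENNReal.rpow_lt_top_of_nonneg hr0.le hbound.ne)
  rw [← ENNReal.rpow_inv_le_iff hr0, ← one_div]
  exact lintegral_rpow_min_le_of_identDistrib_mul_add_one hA hAX hfix hr n

lemma integral_eq_inv_of_identDistrib_mul_add_one {A X : Ω → ℝ} (hA : AEMeasurable A P)
    (hAX : IndepFun A X P) (hfix : IdentDistrib X (fun ω ↦ A ω * X ω + 1) P P)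
    (hX : Integrable X P) : P[X] = (1 - P[A])⁻¹ := by
  have hAX_int : Integrable (fun ω ↦ A ω * X ω) P := by
    simpa [Pi.sub_def] using (hfix.integrable_snd hX).sub (integrable_const (1 : ℝ))
  have hmean : P[X] = P[A] * P[X] + 1 :=
    calc P[X] = ∫ ω, (A ω * X ω + 1) ∂P := hfix.integral_eq
      _ = P[A] * P[X] + 1 := by
        rw [integral_add hAX_int (integrable_const 1), integral_const, probReal_univ, one_smul,
          hAX.integral_fun_mul_eq_mul_integral hA.aestronglyMeasurable hX.aestronglyMeasurable]
  exact eq_inv_of_mul_eq_one_left (by linear_combination hmean)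

theorem variance_eq_div_of_identDistrib_mul_add_one {A X : Ω → ℝ} (hA : AEMeasurable A P)
    (hAX : IndepFun A X P) (hfix : IdentDistrib X (fun ω ↦ A ω * X ω + 1) P P)
    (hX : MemLp X 2 P) (hA2 : P[A ^ 2] ≠ 1) :
    Var[X; P] = (P[A ^ 2] - P[A] ^ 2) / ((1 - P[A]) ^ 2 * (1 - P[A ^ 2])) := by
  have hAX_memLp : MemLp (A * X) 2 P := by
    simpa [Pi.sub_def, Pi.mul_def] using (hfix.memLp_snd hX).sub (memLp_const (1 : ℝ))
  have hsq : Measurable fun x : ℝ ↦ x ^ 2 := by fun_prop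
  have hAX_sq : P[(A * X) ^ 2] = P[A ^ 2] * P[X ^ 2] := by
    rw [mul_pow]
    exact (hAX.comp hsq hsq).integral_mul_eq_mul_integral (hA.pow_const 2).aestronglyMeasurable
      (hX.aestronglyMeasurable.pow 2)
  have hvar_AX : Var[X; P] = P[A ^ 2] * P[X ^ 2] - (P[A] * P[X]) ^ 2 := by
    rw [hfix.variance_eq, variance_add_const (X := fun ω ↦ A ω * X ω)
      hAX_memLp.aestronglyMeasurable, ← Pi.mul_def, variance_eq_sub hAX_memLp, hAX_sq,
      hAX.integral_mul_eq_mul_integral hA.aestronglyMeasurable hX.aestronglyMeasurable]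
  have hvar_X : Var[X; P] = P[X ^ 2] - P[X] ^ 2 := variance_eq_sub hX
  have hlin : Var[X; P] * (1 - P[A ^ 2]) = (P[A ^ 2] - P[A] ^ 2) * P[X] ^ 2 := by
    linear_combination hvar_AX - P[A ^ 2] * hvar_X
  rw [eq_div_of_mul_eq (sub_ne_zero.2 hA2.symm) hlin,
    integral_eq_inv_of_identDistrib_mul_add_one hA hAX hfix (hX.integrable one_le_two), inv_pow,
    ← div_eq_mul_inv, div_div]

end FixedPoint

section Geometric

lemma hasSum_coe_sq_mul_geometric_of_norm_lt_one {𝕜 : Type*} [NormedField 𝕜] [CharZero 𝕜]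
    [HasSummableGeomSeries 𝕜] {r : 𝕜} (hr : ‖r‖ < 1) :
    HasSum (fun n : ℕ ↦ (n : 𝕜) ^ 2 * r ^ n) (r * (1 + r) / (1 - r) ^ 3) := by
  have hr1 : 1 - r ≠ 0 := sub_ne_zero.2 fun h ↦ by simp [← h] at hr
  have h := (((hasSum_choose_mul_geometric_of_norm_lt_one 2 hr).mul_left 2).sub
    ((hasSum_coe_mul_geometric_of_norm_lt_one hr).mul_left 3)).sub
    ((hasSum_geometric_of_norm_lt_one hr).mul_left 2)
  convert! h using 1
  · ext n
    rw [Nat.cast_choose_two]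
    push_cast
    ring
  · field_simp
    ring

variable {p : unitInterval}

lemma norm_one_sub_lt_one (hp : p ≠ 0) : ‖(1 - p : ℝ)‖ < 1 := by
  have hp0 : 0 < (p : ℝ) := unitInterval.pos_iff_ne_zero.2 hp
  rw [Real.norm_of_nonneg (unitInterval.one_minus_nonneg p)]
  linarith

lemma integral_natCast_geometricMeasure (hp : p ≠ 0) :
    ∫ n, (n : ℝ) ∂geometricMeasure p = (1 - p) / p := by
  have hp0 : (p : ℝ) ≠ 0 := unitInterval.coe_ne_zero.2 hp
  rw [integral_geometricMeasure hp]
  convert! ((hasSum_coe_mul_geometric_of_norm_lt_one (norm_one_sub_lt_one hp)).mul_left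
    (p : ℝ)).tsum_eq using 1
  · exact tsum_congr fun n ↦ by rw [smul_eq_mul]; ring
  · rw [_root_.sub_sub_cancel]
    field_simp

lemma hasSum_sq_geometricMeasure (hp : p ≠ 0) :
    HasSum (fun n : ℕ ↦ (1 - p : ℝ) ^ n * p * n ^ 2) ((1 - p) * (2 - p) / p ^ 2) := by
  have hp0 : (p : ℝ) ≠ 0 := unitInterval.coe_ne_zero.2 hp
  convert! (hasSum_coe_sq_mul_geometric_of_norm_lt_one (norm_one_sub_lt_one hp)).mul_left
    (p : ℝ) using 1
  · ext n
    ring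
  · rw [_root_.sub_sub_cancel]
    field_simp
    ring

lemma integral_sq_geometricMeasure (hp : p ≠ 0) :
    ∫ n, (n : ℝ) ^ 2 ∂geometricMeasure p = (1 - p) * (2 - p) / p ^ 2 :=
  (integral_geometricMeasure hp _).trans (hasSum_sq_geometricMeasure hp).tsum_eq

lemma lintegral_sq_geometricMeasure (hp : p ≠ 0) :
    ∫⁻ n, (n : ℝ≥0∞) ^ 2 ∂geometricMeasure p = ENNReal.ofReal ((1 - p) * (2 - p) / p ^ 2) := by
  have hint : Integrable (fun n : ℕ ↦ (n : ℝ) ^ 2) (geometricMeasure p) :=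
    (integrable_geometricMeasure_iff hp).2 (by simpa using (hasSum_sq_geometricMeasure hp).summable)
  rw [← integral_sq_geometricMeasure hp,
    ofReal_integral_eq_lintegral_ofReal hint (ae_of_all _ fun n ↦ by positivity)]
  simp [ENNReal.ofReal_pow]

lemma lintegral_sq_geometricMeasure_lt_one_iff (hp : p ≠ 0) :
    ∫⁻ n, (n : ℝ≥0∞) ^ 2 ∂geometricMeasure p < 1 ↔ 2 / 3 < (p : ℝ) := by
  have hp0 : 0 < (p : ℝ) := unitInterval.pos_iff_ne_zero.2 hp
  rw [lintegral_sq_geometricMeasure hp, ENNReal.ofReal_lt_one, div_lt_one (by positivity)]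
  constructor <;> intro h <;> linarith

lemma hasLaw_geometricMeasure_of_measure_eq {Ω : Type*} [MeasurableSpace Ω] {P : Measure Ω}
    {A : Ω → ℕ} (hA : AEMeasurable A P) (hp : p ≠ 0)
    (hgeo : ∀ k : ℕ, P {ω | A ω = k} = ENNReal.ofReal ((1 - p) ^ k * p)) :
    HasLaw A (geometricMeasure p) P where
  aemeasurable := hA
  map_eq := Measure.ext_of_singleton fun k ↦ by
    rw [Measure.map_apply_of_aemeasurable hA (measurableSet_singleton k),
      geometricMeasure_singleton hp, ← hgeo k]
    rfl

lemma variance_eq_of_geometricMeasure_of_identDistrib_mul_add_one {Ω : Type*} [MeasurableSpace Ω]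
    {P : Measure Ω} [IsProbabilityMeasure P] {A X : Ω → ℕ} (hp : 2 / 3 < (p : ℝ))
    (hA : HasLaw A (geometricMeasure p) P) (hAX : IndepFun A X P)
    (hfix : IdentDistrib X (fun ω ↦ A ω * X ω + 1) P P)
    (hX : MemLp (fun ω ↦ (X ω : ℝ)) 2 P) :
    Var[fun ω ↦ (X ω : ℝ); P] =
      -((p - 1) * p ^ 2) / ((1 - 2 * p) ^ 2 * (3 * p - 2)) := by
  have hp0 : 0 < (p : ℝ) := by linarith
  have hp_ne : p ≠ 0 := unitInterval.pos_iff_ne_zero.1 hp0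
  have hcast : Measurable (Nat.cast : ℕ → ℝ) := by fun_prop
  have hmean : P[fun ω ↦ (A ω : ℝ)] = (1 - p : ℝ) / p :=
    (hA.integral_comp (by fun_prop)).trans (integral_natCast_geometricMeasure hp_ne)
  have hsq : P[(fun ω ↦ (A ω : ℝ)) ^ 2] = (1 - p : ℝ) * (2 - p) / p ^ 2 :=
    (hA.integral_comp (f := fun n : ℕ ↦ (n : ℝ) ^ 2) (by fun_prop)).trans
      (integral_sq_geometricMeasure hp_ne)
  have hone_sub_mean : 1 - P[fun ω ↦ (A ω : ℝ)] = -(1 - 2 * p : ℝ) / p := by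
    rw [hmean]; field_simp; ring
  have hone_sub_sq : 1 - P[(fun ω ↦ (A ω : ℝ)) ^ 2] = (3 * p - 2 : ℝ) / p ^ 2 := by
    rw [hsq]; field_simp; ring
  have h3p : 3 * (p : ℝ) - 2 ≠ 0 := by linarith
  have hsq_ne_one : P[(fun ω ↦ (A ω : ℝ)) ^ 2] ≠ 1 := by
    rw [ne_comm, ← sub_ne_zero, hone_sub_sq]
    positivity
  rw [variance_eq_div_of_identDistrib_mul_add_one (A := fun ω ↦ (A ω : ℝ))
    (X := fun ω ↦ (X ω : ℝ)) (hcast.comp_aemeasurable hA.aemeasurable) (hAX.comp hcast hcast)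
    (by simpa [Function.comp_def] using hfix.comp hcast) hX hsq_ne_one,
    hone_sub_mean, hone_sub_sq, hmean, hsq]
  field_simp
  ring

end Geometric

theorem stmt_11 {Ω : Type*} [MeasurableSpace Ω] {P : Measure Ω} [IsProbabilityMeasure P]
    {A X : Ω → ℕ} (hA : Measurable A) (hX : Measurable X)
    (hAX : IndepFun A X P)
    (h0 : 0 < P {ω | A ω = 0})
    (hfix : Measure.map X P = Measure.map (fun ω => A ω * X ω + 1) P)
    (p : ℝ) (hp0 : 0 < p) (hp1 : p < 1)
    (hgeo : ∀ k : ℕ, P {ω | A ω = k} = ENNReal.ofReal ((1 - p) ^ k * p)) :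
    ((∫⁻ ω, (X ω : ℝ≥0∞) ^ 2 ∂P) < ⊤ ↔ 2 / 3 < p) ∧
    (2 / 3 < p →
      (∫⁻ ω, (X ω : ℝ≥0∞) ^ 2 ∂P) - (∫⁻ ω, (X ω : ℝ≥0∞) ∂P) ^ 2 =
        ENNReal.ofReal (-((p - 1) * p ^ 2) / ((1 - 2 * p) ^ 2 * (3 * p - 2)))) := by
  let q : unitInterval := ⟨p, hp0.le, hp1.le⟩
  have hq : q ≠ 0 := unitInterval.pos_iff_ne_zero.1 hp0
  have hA_law : HasLaw A (geometricMeasure q) P :=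
    hasLaw_geometricMeasure_of_measure_eq hA.aemeasurable hq hgeo
  have hX_law : IdentDistrib X (fun ω ↦ A ω * X ω + 1) P P :=
    ⟨hX.aemeasurable, by fun_prop, hfix⟩
  have hfinite_iff : ∫⁻ ω, (X ω : ℝ≥0∞) ^ 2 ∂P < ⊤ ↔ 2 / 3 < p := by
    rw [← lintegral_sq_geometricMeasure_lt_one_iff hq, ← hA_law.lintegral_comp (by fun_prop)]
    simpa using lintegral_rpow_lt_top_iff_of_identDistrib_mul_add_one hA.aemeasurable hAX hX_law
      one_le_two
  refine ⟨hfinite_iff, fun hp ↦ ?_⟩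
  have hX_memLp : MemLp (fun ω ↦ (X ω : ℝ)) 2 P :=
    ⟨by fun_prop, (eLpNorm_lt_top_iff_lintegral_rpow_enorm_lt_top two_ne_zero ofNat_ne_top).2
      (by simpa using hfinite_iff.2 hp)⟩
  rw [← variance_eq_of_geometricMeasure_of_identDistrib_mul_add_one hp hA_law hAX hX_law hX_memLp]
  simpa using lintegral_enorm_sq_sub_sq_lintegral_enorm_eq_ofReal_variance
    (ae_of_all P fun ω ↦ (X ω).cast_nonneg) hX_memLp
end

section
/- Suppose A has the Bernoulli distribution with parameter 0 < p < 1, i.e., ℙ[A = 1] = p and ℙ[A = 0] = 1 − p. Then X has a geometric distribution on {1, 2, 3, …}: ℙ[X = n] = (1 − p) · p^{n−1} for every n ≥ 1, and ℙ[X = 0] = 0. -/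
open MeasureTheory ProbabilityTheory ENNReal

/-!
Reading the fixed-point equation at `n + 1` gives `ℙ[X = n + 1] = ℙ[A * X = n]`. Since `X` is almost
surely nonzero, this is `ℙ[A = 0]` at `n = 0`; for `n ≠ 0`, independence turns it into the Dirichlet
convolution `∑_{d e = n} ℙ[A = d] ℙ[X = e]`. When `A` takes only the values `0` and `1`, the single
surviving term is `ℙ[A = 1] ℙ[X = n]`, so the law of `X` is a geometric progression from `1` on.
-/

section

variable {Ω : Type*} [MeasurableSpace Ω] {μ : Measure Ω}

theorem ae_mem_finset_of_sum_measure_eq_one {α : Type*} [MeasurableSpace α]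
    [MeasurableSingletonClass α] [IsProbabilityMeasure μ] {Y : Ω → α} (hY : Measurable Y)
    (s : Finset α) (hs : ∑ a ∈ s, μ {ω | Y ω = a} = 1) : ∀ᵐ ω ∂μ, Y ω ∈ s := by
  have preimage_prob : μ (Y ⁻¹' s) = 1 := by
    rw [← sum_measure_preimage_singleton s fun a _ => hY (measurableSet_singleton a)]
    exact hs
  exact (prob_compl_eq_zero_iff (hY s.measurableSet)).2 preimage_prob

variable {A X : Ω → ℕ}

theorem measure_mul_eq_sum_divisorsAntidiagonal (hA : AEMeasurable A μ) (hX : AEMeasurable X μ)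
    (hAX : IndepFun A X μ) {n : ℕ} (hn : n ≠ 0) :
    μ {ω | A ω * X ω = n} =
      ∑ d ∈ n.divisorsAntidiagonal, μ {ω | A ω = d.1} * μ {ω | X ω = d.2} := by
  have preimage_eq :
      {ω | A ω * X ω = n} = (fun ω => (A ω, X ω)) ⁻¹' n.divisorsAntidiagonal := by
    ext ω
    simp [hn]
  rw [preimage_eq, ← Measure.map_apply_of_aemeasurable (hA.prodMk hX) (Finset.measurableSet _),
    ← sum_measure_singleton]
  refine Finset.sum_congr rfl fun d _ => ?_
  rw [Measure.map_apply_of_aemeasurable (hA.prodMk hX) (measurableSet_singleton d),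
    ← Set.singleton_prod_singleton, Set.mk_preimage_prod]
  exact hAX.measure_inter_preimage_eq_mul _ _ (measurableSet_singleton _)
    (measurableSet_singleton _)

/-- `X` solves the distributional fixed-point equation `X =_d A * X + 1`. Through
`IdentDistrib` this includes a.e.-measurability of both sides; independence of `A` and `X` is a
separate condition. -/
def IsAffineFixedPoint (A X : Ω → ℕ) (μ : Measure Ω) : Prop :=
  IdentDistrib X (fun ω => A ω * X ω + 1) μ μ

namespace IsAffineFixedPoint

variable (hfix : IsAffineFixedPoint A X μ)
include hfix

theorem measure_eq_zero : μ {ω | X ω = 0} = 0 := by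
  simpa [Set.preimage] using IdentDistrib.measure_mem_eq hfix (measurableSet_singleton 0)

theorem measure_eq_add_one_eq_measure_mul_eq (n : ℕ) :
    μ {ω | X ω = n + 1} = μ {ω | A ω * X ω = n} := by
  simpa [Set.preimage] using IdentDistrib.measure_mem_eq hfix (measurableSet_singleton (n + 1))

theorem measure_eq_one : μ {ω | X ω = 1} = μ {ω | A ω = 0} := by
  have X_ne_zero : ∀ᵐ ω ∂μ, X ω ≠ 0 := by
    simpa [ae_iff] using hfix.measure_eq_zero
  rw [hfix.measure_eq_add_one_eq_measure_mul_eq 0]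
  refine measure_congr (Filter.eventuallyEq_set.2 ?_)
  filter_upwards [X_ne_zero] with ω hω
  simp [hω]

theorem measure_eq_add_one_eq_sum_divisorsAntidiagonal (hA : AEMeasurable A μ)
    (hAX : IndepFun A X μ) {n : ℕ} (hn : n ≠ 0) :
    μ {ω | X ω = n + 1} =
      ∑ d ∈ n.divisorsAntidiagonal, μ {ω | A ω = d.1} * μ {ω | X ω = d.2} := by
  rw [hfix.measure_eq_add_one_eq_measure_mul_eq,
    measure_mul_eq_sum_divisorsAntidiagonal hA (IdentDistrib.aemeasurable_fst hfix) hAX hn]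

theorem measure_eq_add_one_of_ae_le_one (hA : AEMeasurable A μ) (hAX : IndepFun A X μ)
    (hA_le : ∀ᵐ ω ∂μ, A ω ≤ 1) {n : ℕ} (hn : n ≠ 0) :
    μ {ω | X ω = n + 1} = μ {ω | A ω = 1} * μ {ω | X ω = n} := by
  have measure_A_eq_zero {d : ℕ} (hd : 1 < d) : μ {ω | A ω = d} = 0 :=
    measure_mono_null (fun ω (hω : A ω = d) => by simpa [hω] using hd) (ae_iff.1 hA_le)
  rw [hfix.measure_eq_add_one_eq_sum_divisorsAntidiagonal hA hAX hn]
  refine Finset.sum_eq_single_of_mem (1, n) (by simp [hn]) fun d hd hd_ne => ?_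
  obtain ⟨hd_mul, -⟩ := Nat.mem_divisorsAntidiagonal.1 hd
  have hd_gt : 1 < d.1 := by
    by_contra! hle
    interval_cases h : d.1
    · exact hn (by simpa using hd_mul.symm)
    · exact hd_ne (Prod.ext h (by simpa using hd_mul))
  rw [measure_A_eq_zero hd_gt, zero_mul]

theorem measure_eq_add_one_eq_mul_pow (hA : AEMeasurable A μ) (hAX : IndepFun A X μ)
    (hA_le : ∀ᵐ ω ∂μ, A ω ≤ 1) (n : ℕ) :
    μ {ω | X ω = n + 1} = μ {ω | A ω = 0} * μ {ω | A ω = 1} ^ n := by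
  induction n with
  | zero => simpa using hfix.measure_eq_one
  | succ n ih =>
    rw [hfix.measure_eq_add_one_of_ae_le_one hA hAX hA_le n.succ_ne_zero, ih]
    ring

end IsAffineFixedPoint

end

theorem stmt_12 {Ω : Type*} [MeasurableSpace Ω] {P : Measure Ω} [IsProbabilityMeasure P]
    {A X : Ω → ℕ} (hA : Measurable A) (hX : Measurable X)
    (hAX : IndepFun A X P)
    (h0 : 0 < P {ω | A ω = 0})
    (hfix : Measure.map X P = Measure.map (fun ω => A ω * X ω + 1) P)
    (p : ℝ) (hp0 : 0 < p) (hp1 : p < 1)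
    (hber1 : P {ω | A ω = 1} = ENNReal.ofReal p)
    (hber0 : P {ω | A ω = 0} = ENNReal.ofReal (1 - p)) :
    P {ω | X ω = 0} = 0 ∧
    ∀ n : ℕ, 1 ≤ n → P {ω | X ω = n} = ENNReal.ofReal ((1 - p) * p ^ (n - 1)) := by
  have hX_fix : IsAffineFixedPoint A X P :=
    ⟨hX.aemeasurable, ((hA.mul hX).add_const 1).aemeasurable, hfix⟩
  have hq : 0 ≤ 1 - p := sub_nonneg.2 hp1.le
  have sum_eq_one : ∑ a ∈ Finset.range 2, P {ω | A ω = a} = 1 := by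
    rw [Finset.sum_range_succ, Finset.sum_range_one, hber0, hber1, ← ofReal_add hq hp0.le,
      sub_add_cancel, ofReal_one]
  have hA_le : ∀ᵐ ω ∂P, A ω ≤ 1 := by
    filter_upwards [ae_mem_finset_of_sum_measure_eq_one hA _ sum_eq_one] with ω hω
    exact Finset.mem_range_succ_iff.1 hω
  refine ⟨hX_fix.measure_eq_zero, fun n hn => ?_⟩
  obtain ⟨k, rfl⟩ := Nat.exists_eq_add_of_le' hn
  rw [hX_fix.measure_eq_add_one_eq_mul_pow hA.aemeasurable hAX hA_le, hber0, hber1,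
    Nat.add_sub_cancel, ofReal_mul hq, ofReal_pow hp0.le]
end

section
/- The probability mass function of X satisfies the recursion: ℙ[X = 0] = 0, ℙ[X = 1] = ℙ[A = 0], and for every n ≥ 2, ℙ[X = n] = ∑_{d ∣ n−1} ℙ[A = d] · ℙ[X = (n−1)/d], where the sum runs over the positive divisors d of n − 1. -/
open MeasureTheory ProbabilityTheory ENNReal

section Independence

variable {Ω : Type*} [MeasurableSpace Ω] {P : Measure Ω}

theorem measure_prodMk_mem_finset_eq_sum_mul {α β : Type*}
    [MeasurableSpace α] [MeasurableSingletonClass α]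
    [MeasurableSpace β] [MeasurableSingletonClass β]
    {A : Ω → α} {X : Ω → β} (hA : AEMeasurable A P) (hX : AEMeasurable X P)
    (hAX : IndepFun A X P) (s : Finset (α × β)) :
    P {ω | (A ω, X ω) ∈ s} = ∑ p ∈ s, P {ω | A ω = p.1} * P {ω | X ω = p.2} := by
  have joint_law_singleton (p : α × β) :
      P.map (fun ω => (A ω, X ω)) {p} = P {ω | A ω = p.1} * P {ω | X ω = p.2} := by
    rw [Measure.map_apply_of_aemeasurable (hA.prodMk hX) (measurableSet_singleton p),
      ← Set.singleton_prod_singleton, Set.mk_preimage_prod]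
    exact hAX.measure_inter_preimage_eq_mul _ _ (measurableSet_singleton p.1)
      (measurableSet_singleton p.2)
  calc P {ω | (A ω, X ω) ∈ s}
      = P.map (fun ω => (A ω, X ω)) s :=
        (Measure.map_apply_of_aemeasurable (hA.prodMk hX) s.measurableSet).symm
    _ = ∑ p ∈ s, P.map (fun ω => (A ω, X ω)) {p} := sum_measure_singleton.symm
    _ = ∑ p ∈ s, P {ω | A ω = p.1} * P {ω | X ω = p.2} :=
        Finset.sum_congr rfl fun p _ => joint_law_singleton p

theorem measure_mul_eq_eq_sum_divisors {A X : Ω → ℕ}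
    (hA : AEMeasurable A P) (hX : AEMeasurable X P) (hAX : IndepFun A X P)
    {m : ℕ} (hm : m ≠ 0) :
    P {ω | A ω * X ω = m} = ∑ d ∈ m.divisors, P {ω | A ω = d} * P {ω | X ω = m / d} := by
  calc P {ω | A ω * X ω = m}
      = P {ω | (A ω, X ω) ∈ m.divisorsAntidiagonal} := by
        simp only [Nat.mem_divisorsAntidiagonal, ne_eq, hm, not_false_eq_true, and_true]
    _ = ∑ p ∈ m.divisorsAntidiagonal, P {ω | A ω = p.1} * P {ω | X ω = p.2} :=
        measure_prodMk_mem_finset_eq_sum_mul hA hX hAX _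
    _ = ∑ d ∈ m.divisors, P {ω | A ω = d} * P {ω | X ω = m / d} :=
        Nat.sum_divisorsAntidiagonal fun a x => P {ω | A ω = a} * P {ω | X ω = x}

end Independence

theorem measure_mul_eq_zero_eq_of_ae_ne_zero {Ω M : Type*} [MeasurableSpace Ω] {P : Measure Ω}
    [MulZeroClass M] [NoZeroDivisors M] {A X : Ω → M} (hX : ∀ᵐ ω ∂P, X ω ≠ 0) :
    P {ω | A ω * X ω = 0} = P {ω | A ω = 0} := by
  refine measure_congr (Filter.eventuallyEq_set.mpr ?_)
  filter_upwards [hX] with ω hω using mul_eq_zero_iff_right hω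

section ShiftedLaw

variable {Ω Ω' : Type*} [MeasurableSpace Ω] [MeasurableSpace Ω']
  {P : Measure Ω} {Q : Measure Ω'} {X : Ω → ℕ} {Y : Ω' → ℕ}

theorem measure_eq_zero_eq_zero_of_identDistrib_add_one
    (h : IdentDistrib X (fun ω => Y ω + 1) P Q) : P {ω | X ω = 0} = 0 := by
  calc P {ω | X ω = 0}
      = Q {ω | Y ω + 1 = 0} := h.measure_mem_eq (measurableSet_singleton 0)
    _ = 0 := by simp

theorem measure_eq_add_one_eq_of_identDistrib_add_one
    (h : IdentDistrib X (fun ω => Y ω + 1) P Q) (m : ℕ) :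
    P {ω | X ω = m + 1} = Q {ω | Y ω = m} := by
  calc P {ω | X ω = m + 1}
      = Q {ω | Y ω + 1 = m + 1} := h.measure_mem_eq (measurableSet_singleton (m + 1))
    _ = Q {ω | Y ω = m} := by simp only [Nat.add_right_cancel_iff]

end ShiftedLaw

theorem stmt_13 {Ω : Type*} [MeasurableSpace Ω] {P : Measure Ω} [IsProbabilityMeasure P]
    {A X : Ω → ℕ} (hA : Measurable A) (hX : Measurable X)
    (hAX : IndepFun A X P)
    (h0 : 0 < P {ω | A ω = 0})
    (hfix : Measure.map X P = Measure.map (fun ω => A ω * X ω + 1) P) :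
    P {ω | X ω = 0} = 0 ∧
    P {ω | X ω = 1} = P {ω | A ω = 0} ∧
    ∀ n : ℕ, 2 ≤ n →
      P {ω | X ω = n} =
        ∑ d ∈ (n - 1).divisors, P {ω | A ω = d} * P {ω | X ω = (n - 1) / d} := by
  have same_law : IdentDistrib X (fun ω => A ω * X ω + 1) P P :=
    ⟨hX.aemeasurable, ((hA.mul hX).add_const 1).aemeasurable, hfix⟩
  have X_null_at_zero : P {ω | X ω = 0} = 0 :=
    measure_eq_zero_eq_zero_of_identDistrib_add_one same_law
  have X_ne_zero : ∀ᵐ ω ∂P, X ω ≠ 0 := by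
    simpa only [ae_iff, not_not] using X_null_at_zero
  refine ⟨X_null_at_zero, ?_, fun n hn => ?_⟩
  · calc P {ω | X ω = 1}
        = P {ω | A ω * X ω = 0} := measure_eq_add_one_eq_of_identDistrib_add_one same_law 0
      _ = P {ω | A ω = 0} := measure_mul_eq_zero_eq_of_ae_ne_zero X_ne_zero
  · obtain ⟨m, rfl⟩ : ∃ m, n = m + 1 := ⟨n - 1, by lia⟩
    rw [Nat.add_sub_cancel, measure_eq_add_one_eq_of_identDistrib_add_one same_law]
    exact measure_mul_eq_eq_sum_divisors hA.aemeasurable hX.aemeasurable hAX (by lia)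
end

section
/- Define X := 1 + ∑_{n ≥ 1} ∏_{k=1}^{n} A_k, which is almost surely a finite natural number. Then there exists a random variable Y : Ω → ℕ such that Y is independent of A_1, Y has the same law as X, and X = A_1 · Y + 1 almost surely; in particular X satisfies the distributional fixed-point equation X =_d A_1 · X + 1 with A_1 independent of X. -/
open MeasureTheory ProbabilityTheory ENNReal

/-!
Peeling the first factor off every product gives the pathwise identity `X = A₁ * Y + 1`, where `Y`
is the same series built from `A₂, A₃, …`. It is a function of `A₂, A₃, …` only, hence independent
of `A₁`, and the shifted i.i.d. sequence has the law of the original one, so `Y` has the law of `X`.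
By the second Borel–Cantelli lemma almost surely `Aₙ = 0` for infinitely many `n`, so both series
almost surely have only finitely many nonzero terms.
-/

section Perpetuity

/-- The perpetuity series `1 + a₀ + a₀ a₁ + a₀ a₁ a₂ + ⋯`, whose leading `1` is the empty
product. -/
noncomputable def perpetuity (a : ℕ → ℝ≥0∞) : ℝ≥0∞ :=
  ∑' n, ∏ k ∈ Finset.range n, a k

lemma perpetuity_eq_one_add_tsum (a : ℕ → ℝ≥0∞) :
    perpetuity a = 1 + ∑' n, ∏ k ∈ Finset.range (n + 1), a k := by
  rw [perpetuity, tsum_eq_zero_add' ENNReal.summable, Finset.prod_range_zero]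

lemma perpetuity_shift_eq_one_add_tsum_Icc (a : ℕ → ℝ≥0∞) :
    perpetuity (fun k => a (k + 1)) = 1 + ∑' n, ∏ k ∈ Finset.Icc 1 (n + 1), a k := by
  rw [perpetuity_eq_one_add_tsum]
  congr! 3 with n
  rw [Finset.range_eq_Ico, Finset.prod_Ico_add' a 0 (n + 1) 1, zero_add,
    Finset.Ico_add_one_right_eq_Icc]

lemma perpetuity_eq_mul_add_one (a : ℕ → ℝ≥0∞) :
    perpetuity a = a 0 * perpetuity (fun k => a (k + 1)) + 1 := by
  rw [perpetuity_eq_one_add_tsum, add_comm, perpetuity, ← ENNReal.tsum_mul_left]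
  simp only [Finset.prod_range_succ', mul_comm]

lemma perpetuity_eq_sum_of_eq_zero {a : ℕ → ℝ≥0∞} {m : ℕ} (hm : a m = 0) :
    perpetuity a = ∑ n ∈ Finset.range (m + 1), ∏ k ∈ Finset.range n, a k := by
  refine tsum_eq_sum fun n hn => Finset.prod_eq_zero (i := m) ?_ hm
  simp only [Finset.mem_range] at hn ⊢
  lia

@[fun_prop]
lemma measurable_perpetuity : Measurable perpetuity := by
  unfold perpetuity
  fun_prop

/-- The value of the perpetuity series of a sequence of naturals as a natural number; it is the
junk value `0` when the series diverges. -/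
noncomputable def natPerpetuity (a : ℕ → ℕ) : ℕ :=
  ⌊(perpetuity fun k => a k).toReal⌋₊

lemma natCast_natPerpetuity {a : ℕ → ℕ} (ha : ∃ m, a m = 0) :
    (natPerpetuity a : ℝ≥0∞) = perpetuity fun k => a k := by
  obtain ⟨m, hm⟩ := ha
  obtain ⟨N, hN⟩ : ∃ N : ℕ, perpetuity (fun k => a k) = N :=
    ⟨∑ n ∈ Finset.range (m + 1), ∏ k ∈ Finset.range n, a k, by
      rw [perpetuity_eq_sum_of_eq_zero (m := m) (by simp [hm])]
      push_cast
      rfl⟩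
  simp [natPerpetuity, hN]

lemma natPerpetuity_eq_mul_add_one {a : ℕ → ℕ} (ha : ∃ m, a (m + 1) = 0) :
    natPerpetuity a = a 0 * natPerpetuity (fun k => a (k + 1)) + 1 := by
  have ha' : ∃ m, a m = 0 := ha.imp' (· + 1) fun _ => id
  have hrec := perpetuity_eq_mul_add_one fun k => (a k : ℝ≥0∞)
  rw [← natCast_natPerpetuity ha', ← natCast_natPerpetuity ha] at hrec
  exact_mod_cast hrec

lemma one_add_tsum_prod_Icc_eq_natPerpetuity {a : ℕ → ℕ} (ha : ∃ m, a (m + 1) = 0) :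
    1 + ∑' n, ∏ k ∈ Finset.Icc 1 (n + 1), (a k : ℝ≥0∞) = natPerpetuity fun k => a (k + 1) := by
  rw [natCast_natPerpetuity ha, perpetuity_shift_eq_one_add_tsum_Icc fun k => (a k : ℝ≥0∞)]

lemma measurable_natPerpetuity : Measurable natPerpetuity := by
  unfold natPerpetuity
  fun_prop

end Perpetuity

section Independence

variable {Ω ι : Type*} {E : ι → Type*} [∀ i, MeasurableSpace (E i)] {X : ∀ i, Ω → E i}

lemma comap_pi_eq_iSup_range {κ : Type*} (f : κ → ι) :
    MeasurableSpace.comap (fun ω j => X (f j) ω) MeasurableSpace.pi =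
      ⨆ i ∈ Set.range f, MeasurableSpace.comap (X i) inferInstance := by
  simp only [MeasurableSpace.pi, MeasurableSpace.comap_iSup, MeasurableSpace.comap_comp, iSup_range]
  rfl

variable [MeasurableSpace Ω] {P : Measure Ω}

lemma indepFun_of_iIndepFun_of_disjoint_range {κ κ' : Type*} (hX : ∀ i, Measurable (X i))
    (hindep : iIndepFun X P) {f : κ → ι} {g : κ' → ι}
    (hfg : Disjoint (Set.range f) (Set.range g)) :
    IndepFun (fun ω j => X (f j) ω) (fun ω j => X (g j) ω) P :=
  indep_of_indep_of_le_left
    (indep_of_indep_of_le_right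
      (indep_iSup_of_disjoint (fun i => (hX i).comap_le) hindep.iIndep hfg)
      (comap_pi_eq_iSup_range g).le)
    (comap_pi_eq_iSup_range f).le

lemma indepFun_of_iIndepFun_of_notMem_range {κ : Type*} (hX : ∀ i, Measurable (X i))
    (hindep : iIndepFun X P) {i : ι} {g : κ → ι} (hi : i ∉ Set.range g) :
    IndepFun (X i) (fun ω j => X (g j) ω) P :=
  (indepFun_of_iIndepFun_of_disjoint_range (f := fun _ : Unit => i) hX hindep
    (by simpa using hi)).comp (measurable_pi_apply ()) measurable_id

lemma iIndepSet_preimage_of_iIndepFun (hX : ∀ i, Measurable (X i)) (hindep : iIndepFun X P)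
    {s : ∀ i, Set (E i)} (hs : ∀ i, MeasurableSet (s i)) :
    iIndepSet (fun i => X i ⁻¹' s i) P :=
  iIndepSets.iIndepSet_of_mem (π := fun i => {t | MeasurableSet[.comap (X i) inferInstance] t})
    (fun i => ⟨s i, hs i, rfl⟩) (fun i => hX i (hs i)) hindep.iIndep.iIndepSets'

end Independence

section IdenticallyDistributed

variable {Ω E : Type*} [MeasurableSpace Ω] [MeasurableSpace E] {P : Measure Ω}

lemma identDistrib_precomp_of_injective {ι κ : Type*} [Countable κ] {X : ι → Ω → E}
    (hindep : iIndepFun X P) (hident : ∀ i j, IdentDistrib (X i) (X j) P P) {f g : κ → ι}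
    (hf : f.Injective) (hg : g.Injective) :
    IdentDistrib (fun ω k => X (f k) ω) (fun ω k => X (g k) ω) P P :=
  .pi (fun _ => hident _ _) (hindep.precomp hf) (hindep.precomp hg)

lemma ae_frequently_mem_of_iIndepFun_identDistrib {X : ℕ → Ω → E}
    (hX : ∀ n, Measurable (X n)) (hindep : iIndepFun X P)
    (hident : ∀ m n, IdentDistrib (X m) (X n) P P) {s : Set E} (hs : MeasurableSet s) {m : ℕ}
    (hpos : P (X m ⁻¹' s) ≠ 0) :
    ∀ᵐ ω ∂P, ∃ᶠ n in Filter.atTop, X n ω ∈ s := by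
  have : IsProbabilityMeasure P := hindep.isProbabilityMeasure
  have hmeas n : MeasurableSet (X n ⁻¹' s) := hX n hs
  have hsum : ∑' n, P (X n ⁻¹' s) = ∞ := by
    simp_rw [fun n => (hident n m).measure_mem_eq hs]
    exact ENNReal.tsum_const_eq_top_of_ne_zero hpos
  have hlimsup := measure_limsup_eq_one hmeas
    (iIndepSet_preimage_of_iIndepFun hX hindep fun _ => hs) hsum
  filter_upwards [(mem_ae_iff_prob_eq_one (MeasurableSet.measurableSet_limsup hmeas)).2 hlimsup]
    with ω hω
  exact Filter.mem_limsup_iff_frequently_mem.1 hω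

end IdenticallyDistributed

theorem stmt_15 {Ω : Type*} [MeasurableSpace Ω] {P : Measure Ω} [IsProbabilityMeasure P]
    (A : ℕ → Ω → ℕ) (hA : ∀ n, Measurable (A n))
    (hindep : iIndepFun A P)
    (hident : ∀ n, Measure.map (A n) P = Measure.map (A 1) P)
    (h0 : 0 < P {ω | A 1 ω = 0})
    (X : Ω → ℕ) (hXmeas : Measurable X)
    (hXdef : ∀ᵐ ω ∂P, (X ω : ℝ≥0∞) =
      1 + ∑' n : ℕ, ∏ k ∈ Finset.Icc 1 (n + 1), (A k ω : ℝ≥0∞)) :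
    (∀ᵐ ω ∂P,
      (1 + ∑' n : ℕ, ∏ k ∈ Finset.Icc 1 (n + 1), (A k ω : ℝ≥0∞)) < ⊤) ∧
    ∃ Y : Ω → ℕ, Measurable Y ∧ IndepFun (A 1) Y P ∧
      Measure.map Y P = Measure.map X P ∧
      (∀ᵐ ω ∂P, X ω = A 1 ω * Y ω + 1) ∧
      Measure.map X P = Measure.map (fun ω => A 1 ω * Y ω + 1) P := by
  have hid m n : IdentDistrib (A m) (A n) P P :=
    ⟨(hA m).aemeasurable, (hA n).aemeasurable, (hident m).trans (hident n).symm⟩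
  have hzero : ∀ᵐ ω ∂P, ∀ j, ∃ k, A (k + j) ω = 0 := by
    filter_upwards [ae_frequently_mem_of_iIndepFun_identDistrib hA hindep hid
      (measurableSet_singleton 0) h0.ne'] with ω hω j
    exact (Filter.frequently_map.1 (Filter.map_add_atTop_eq_nat j ▸ hω)).exists
  have hseries := hzero.mono fun ω hω =>
    one_add_tsum_prod_Icc_eq_natPerpetuity (a := (A · ω)) (hω 1)
  have hX : X =ᵐ[P] fun ω => natPerpetuity fun k => A (k + 1) ω := by
    filter_upwards [hXdef, hseries] with ω h h' using by exact_mod_cast h.trans h'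
  have hrec : ∀ᵐ ω ∂P, X ω = A 1 ω * natPerpetuity (fun k => A (k + 2) ω) + 1 := by
    filter_upwards [hX, hzero] with ω h hω using h.trans (natPerpetuity_eq_mul_add_one (hω 2))
  have hheadTail : IndepFun (A 1) (fun ω k => A (k + 2) ω) P :=
    indepFun_of_iIndepFun_of_notMem_range hA hindep (by simp)
  have hshift : IdentDistrib (fun ω k => A (k + 2) ω) (fun ω k => A (k + 1) ω) P P :=
    identDistrib_precomp_of_injective hindep hid (add_left_injective 2) (add_left_injective 1)
  refine ⟨hseries.mono fun ω h => h ▸ natCast_lt_top _,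
    fun ω => natPerpetuity fun k => A (k + 2) ω, measurable_natPerpetuity.comp (by fun_prop),
    hheadTail.comp measurable_id measurable_natPerpetuity, ?_, hrec, Measure.map_congr hrec⟩
  exact (hshift.comp measurable_natPerpetuity).map_eq.trans (Measure.map_congr hX).symm
end

section
/- Suppose A has the Poisson distribution with parameter λ, where 0 < λ < 1, i.e., ℙ[A = k] = e^{−λ} λ^k / k! for k ∈ ℕ. Then E[X] is finite and the parameter is recovered from the first moment by λ = 1 − 1/E[X]. -/
open MeasureTheory ProbabilityTheory ENNReal

/-!
Let `X` have the law of `A * X + B` with values in `[0, ∞]`, where `A` is independent of `X` and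
`a = E[A] < 1`. Taking expectations gives `E[X] = a * E[X] + E[B]`, which determines `E[X]` only
once it is known to be finite. For the finiteness, average over `A` inside the concave function
`min (· * x) M`: for every constant `c`,
`E[min (c * X) M] ≤ c * E[B] + E[min (c * a * X) M]`.
Iterating from `c = 1` yields
`E[min X M] ≤ (1 + a + ⋯ + a ^ (n - 1)) * E[B] + E[min (a ^ n * X) M]`,
and the last term vanishes as `n → ∞` because `X` is almost surely finite. Hence
`E[min X M] ≤ E[B] / (1 - a)` for every `M`, and `M → ∞` bounds `E[X]`.
-/

section Truncation

variable {Ω : Type*} [MeasurableSpace Ω] {P : Measure Ω} {X : Ω → ℝ≥0∞}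

theorem lintegral_eq_iSup_lintegral_min_natCast (hX : AEMeasurable X P) :
    ∫⁻ ω, X ω ∂P = ⨆ n : ℕ, ∫⁻ ω, min (X ω) n ∂P := by
  have iSup_min_natCast (x : ℝ≥0∞) : ⨆ n : ℕ, min x n = x := by
    rw [← inf_iSup_eq, ENNReal.iSup_natCast, inf_top_eq]
  rw [← lintegral_iSup' (fun n => hX.min aemeasurable_const)
    (.of_forall fun ω m n hmn => min_le_min_left _ (Nat.cast_le.2 hmn))]
  simp only [iSup_min_natCast]

theorem lintegral_min_const_le [IsProbabilityMeasure P] (X : Ω → ℝ≥0∞) (M : ℝ≥0∞) :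
    ∫⁻ ω, min (X ω) M ∂P ≤ min (∫⁻ ω, X ω ∂P) M :=
  le_min (lintegral_mono fun _ => min_le_left _ _) <| calc
    ∫⁻ ω, min (X ω) M ∂P ≤ ∫⁻ _, M ∂P := lintegral_mono fun _ => min_le_right _ _
    _ = M := by simp

theorem tendsto_lintegral_min_pow_mul [IsFiniteMeasure P] (hX : AEMeasurable X P)
    (hX_fin : ∀ᵐ ω ∂P, X ω ≠ ⊤) {a : ℝ≥0∞} (ha : a < 1) {M : ℝ≥0∞} (hM : M ≠ ⊤) :
    Filter.Tendsto (fun n : ℕ => ∫⁻ ω, min (a ^ n * X ω) M ∂P) Filter.atTop (nhds 0) := by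
  rw [← lintegral_zero (μ := P)]
  refine tendsto_lintegral_of_dominated_convergence' (fun _ => M)
    (fun n => (hX.const_mul _).min aemeasurable_const)
    (fun n => .of_forall fun ω => min_le_right _ _)
    (by simpa using mul_ne_top hM (measure_ne_top P _)) ?_
  filter_upwards [hX_fin] with ω hω
  have pow_mul_tendsto : Filter.Tendsto (fun n : ℕ => a ^ n * X ω) Filter.atTop (nhds 0) := by
    simpa using ENNReal.Tendsto.mul_const (ENNReal.tendsto_pow_atTop_nhds_zero_of_lt_one ha)
      (Or.inr hω)
  simpa using pow_mul_tendsto.min tendsto_const_nhds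

end Truncation

section AffineFixedPoint

variable {Ω : Type*} [MeasurableSpace Ω] {P : Measure Ω} {A B X : Ω → ℝ≥0∞}

theorem lintegral_eq_mul_add_of_identDistrib (hA : AEMeasurable A P) (hAX : IndepFun A X P)
    (hfix : IdentDistrib X (fun ω => A ω * X ω + B ω) P P) :
    ∫⁻ ω, X ω ∂P = (∫⁻ ω, A ω ∂P) * ∫⁻ ω, X ω ∂P + ∫⁻ ω, B ω ∂P := by
  have hX : AEMeasurable X P := hfix.aemeasurable_fst
  calc
    ∫⁻ ω, X ω ∂P = ∫⁻ ω, (A ω * X ω + B ω) ∂P := hfix.lintegral_eq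
    _ = ∫⁻ ω, A ω * X ω ∂P + ∫⁻ ω, B ω ∂P := lintegral_add_left' (hA.mul hX) B
    _ = (∫⁻ ω, A ω ∂P) * ∫⁻ ω, X ω ∂P + ∫⁻ ω, B ω ∂P := by
      rw [lintegral_mul_eq_lintegral_mul_lintegral_of_indepFun'' hA hX hAX]

variable [IsProbabilityMeasure P]

theorem lintegral_min_mul_le_of_indepFun (hA : AEMeasurable A P) (hX : AEMeasurable X P)
    (hAX : IndepFun A X P) (M : ℝ≥0∞) :
    ∫⁻ ω, min (A ω * X ω) M ∂P ≤ ∫⁻ ω, min ((∫⁻ ω', A ω' ∂P) * X ω) M ∂P := by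
  have joint_law := (indepFun_iff_map_prod_eq_prod_map_map hA hX).1 hAX
  have : IsProbabilityMeasure (P.map A) := Measure.isProbabilityMeasure_map hA
  have average_over_A (x : ℝ≥0∞) :
      ∫⁻ a, min (a * x) M ∂P.map A ≤ min ((∫⁻ ω, A ω ∂P) * x) M := calc
    ∫⁻ a, min (a * x) M ∂P.map A ≤ min (∫⁻ a, a * x ∂P.map A) M := lintegral_min_const_le _ M
    _ = min ((∫⁻ ω, A ω ∂P) * x) M := by
      rw [lintegral_mul_const _ measurable_id', lintegral_map' aemeasurable_id' hA]
  calc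
    ∫⁻ ω, min (A ω * X ω) M ∂P = ∫⁻ p, min (p.1 * p.2) M ∂P.map fun ω => (A ω, X ω) :=
      (lintegral_map' (f := fun p : ℝ≥0∞ × ℝ≥0∞ => min (p.1 * p.2) M) (by fun_prop)
        (hA.prodMk hX)).symm
    _ = ∫⁻ x, ∫⁻ a, min (a * x) M ∂P.map A ∂P.map X := by
      rw [joint_law, lintegral_prod_symm _ (by fun_prop)]
    _ ≤ ∫⁻ x, min ((∫⁻ ω, A ω ∂P) * x) M ∂P.map X := lintegral_mono average_over_A
    _ = ∫⁻ ω, min ((∫⁻ ω', A ω' ∂P) * X ω) M ∂P := lintegral_map' (by fun_prop) hX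

theorem lintegral_min_const_mul_le_of_identDistrib (hA : AEMeasurable A P) (hAX : IndepFun A X P)
    (hfix : IdentDistrib X (fun ω => A ω * X ω + B ω) P P) {c : ℝ≥0∞} (hc : c ≠ ⊤) (M : ℝ≥0∞) :
    ∫⁻ ω, min (c * X ω) M ∂P ≤
      c * ∫⁻ ω, B ω ∂P + ∫⁻ ω, min (c * (∫⁻ ω', A ω' ∂P) * X ω) M ∂P := by
  have hX : AEMeasurable X P := hfix.aemeasurable_fst
  have min_add_le (x y : ℝ≥0∞) : min (x + y) M ≤ y + min x M := by
    rw [add_comm x y, ← min_add_add_left]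
    exact min_le_min_left _ le_add_self
  calc
    ∫⁻ ω, min (c * X ω) M ∂P = ∫⁻ ω, min (c * (A ω * X ω + B ω)) M ∂P :=
      (hfix.comp (u := fun x => min (c * x) M) (by fun_prop)).lintegral_eq
    _ ≤ ∫⁻ ω, (c * B ω + min (A ω * (c * X ω)) M) ∂P := lintegral_mono fun ω => by
      rw [mul_add, mul_left_comm c]
      exact min_add_le _ _
    _ = c * ∫⁻ ω, B ω ∂P + ∫⁻ ω, min (A ω * (c * X ω)) M ∂P := by
      rw [lintegral_add_right' _ (by fun_prop), lintegral_const_mul' _ _ hc]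
    _ ≤ c * ∫⁻ ω, B ω ∂P + ∫⁻ ω, min ((∫⁻ ω', A ω' ∂P) * (c * X ω)) M ∂P := by
      refine add_le_add_right ?_ _
      exact lintegral_min_mul_le_of_indepFun hA (hX.const_mul c)
        (hAX.comp measurable_id (measurable_const_mul c)) M
    _ = c * ∫⁻ ω, B ω ∂P + ∫⁻ ω, min (c * (∫⁻ ω', A ω' ∂P) * X ω) M ∂P := by
      simp only [mul_left_comm, mul_assoc]

theorem lintegral_min_le_sum_pow_mul_add_of_identDistrib (hA : AEMeasurable A P)
    (hAX : IndepFun A X P)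
    (hfix : IdentDistrib X (fun ω => A ω * X ω + B ω) P P) (hA_fin : ∫⁻ ω, A ω ∂P ≠ ⊤)
    (M : ℝ≥0∞) (n : ℕ) :
    ∫⁻ ω, min (X ω) M ∂P ≤ (∑ k ∈ Finset.range n, (∫⁻ ω, A ω ∂P) ^ k) * ∫⁻ ω, B ω ∂P +
      ∫⁻ ω, min ((∫⁻ ω', A ω' ∂P) ^ n * X ω) M ∂P := by
  induction n with
  | zero => simp
  | succ n ih =>
    rw [Finset.sum_range_succ, add_mul, add_assoc, pow_succ]
    exact ih.trans (by
      gcongr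
      exact lintegral_min_const_mul_le_of_identDistrib hA hAX hfix (ENNReal.pow_ne_top hA_fin) M)

theorem lintegral_le_of_identDistrib_mul_add (hA : AEMeasurable A P) (hAX : IndepFun A X P)
    (hfix : IdentDistrib X (fun ω => A ω * X ω + B ω) P P) (hX_fin : ∀ᵐ ω ∂P, X ω ≠ ⊤)
    (hA_lt : ∫⁻ ω, A ω ∂P < 1) :
    ∫⁻ ω, X ω ∂P ≤ (1 - ∫⁻ ω, A ω ∂P)⁻¹ * ∫⁻ ω, B ω ∂P := by
  rw [lintegral_eq_iSup_lintegral_min_natCast hfix.aemeasurable_fst]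
  refine iSup_le fun M => ?_
  have remainder_tendsto := tendsto_lintegral_min_pow_mul hfix.aemeasurable_fst hX_fin hA_lt
    (natCast_ne_top M)
  have bound (n : ℕ) : ∫⁻ ω, min (X ω) M ∂P ≤ (1 - ∫⁻ ω, A ω ∂P)⁻¹ * ∫⁻ ω, B ω ∂P +
      ∫⁻ ω, min ((∫⁻ ω', A ω' ∂P) ^ n * X ω) M ∂P := by
    refine (lintegral_min_le_sum_pow_mul_add_of_identDistrib hA hAX hfix hA_lt.ne_top M n).trans ?_
    gcongr
    rw [← ENNReal.tsum_geometric]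
    exact ENNReal.sum_le_tsum _
  simpa using ge_of_tendsto' (remainder_tendsto.const_add _) bound

theorem lintegral_eq_of_identDistrib_mul_add (hA : AEMeasurable A P) (hAX : IndepFun A X P)
    (hfix : IdentDistrib X (fun ω => A ω * X ω + B ω) P P) (hX_fin : ∀ᵐ ω ∂P, X ω ≠ ⊤)
    (hA_lt : ∫⁻ ω, A ω ∂P < 1) :
    ∫⁻ ω, X ω ∂P = (1 - ∫⁻ ω, A ω ∂P)⁻¹ * ∫⁻ ω, B ω ∂P := by
  refine (lintegral_le_of_identDistrib_mul_add hA hAX hfix hX_fin hA_lt).antisymm ?_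
  by_cases hEX : ∫⁻ ω, X ω ∂P = ⊤
  · exact hEX ▸ le_top
  rw [ENNReal.inv_mul_le_iff (tsub_pos_of_lt hA_lt).ne' (sub_ne_top one_ne_top),
    ENNReal.sub_mul fun _ _ => hEX, one_mul]
  refine ENNReal.le_sub_of_add_le_left (mul_ne_top hA_lt.ne_top hEX) ?_
  exact (lintegral_eq_mul_add_of_identDistrib hA hAX hfix).ge

end AffineFixedPoint

section Poisson

theorem succ_mul_poissonMeasure_singleton_succ (r : NNReal) (k : ℕ) :
    ((k + 1 : ℕ) : ℝ≥0∞) * poissonMeasure r {k + 1} = r * poissonMeasure r {k} := by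
  rw [poissonMeasure_singleton, poissonMeasure_singleton, ← ENNReal.ofReal_natCast,
    ← ENNReal.ofReal_coe_nnreal, ← ENNReal.ofReal_mul (by positivity),
    ← ENNReal.ofReal_mul r.coe_nonneg, Nat.factorial_succ]
  congr 1
  push_cast
  field_simp
  exact pow_succ' _ _

theorem lintegral_natCast_poissonMeasure (r : NNReal) :
    ∫⁻ k : ℕ, (k : ℝ≥0∞) ∂poissonMeasure r = r := by
  have total_mass : ∑' k, poissonMeasure r {k} = 1 := by
    simpa using (lintegral_countable' (μ := poissonMeasure r) fun _ => 1).symm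
  rw [lintegral_countable', tsum_eq_zero_add' ENNReal.summable]
  simp only [succ_mul_poissonMeasure_singleton_succ, ENNReal.tsum_mul_left, total_mass,
    Nat.cast_zero, zero_mul, zero_add, mul_one]

theorem hasLaw_poissonMeasure_of_forall_measure_eq {Ω : Type*} [MeasurableSpace Ω]
    {P : Measure Ω} {A : Ω → ℕ} (hA : AEMeasurable A P) {r : NNReal}
    (hpois : ∀ k : ℕ, P {ω | A ω = k} =
      ENNReal.ofReal (Real.exp (-r) * r ^ k / (Nat.factorial k))) :
    HasLaw A (poissonMeasure r) P where
  aemeasurable := hA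
  map_eq := Measure.ext_of_singleton fun k => by
    rw [Measure.map_apply_of_aemeasurable hA (measurableSet_singleton k),
      poissonMeasure_singleton, ← hpois k]
    rfl

end Poisson

theorem stmt_17_general {Ω : Type*} [MeasurableSpace Ω] {P : Measure Ω} [IsProbabilityMeasure P]
    {A X : Ω → ℝ≥0∞} (hA : AEMeasurable A P) (hAX : IndepFun A X P)
    (hX_fin : ∀ᵐ ω ∂P, X ω ≠ ⊤) (hfix : IdentDistrib X (fun ω => A ω * X ω + 1) P P)
    (hA_lt : ∫⁻ ω, A ω ∂P < 1) :
    ∫⁻ ω, X ω ∂P < ⊤ ∧ (∫⁻ ω, A ω ∂P).toReal = 1 - 1 / (∫⁻ ω, X ω ∂P).toReal := by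
  have hEX : ∫⁻ ω, X ω ∂P = (1 - ∫⁻ ω, A ω ∂P)⁻¹ := by
    simpa using lintegral_eq_of_identDistrib_mul_add hA hAX hfix hX_fin hA_lt
  refine ⟨by simpa [hEX] using hA_lt, ?_⟩
  rw [hEX, toReal_inv, toReal_sub_of_le hA_lt.le one_ne_top, toReal_one, one_div, inv_inv,
    _root_.sub_sub_cancel]

theorem stmt_17 {Ω : Type*} [MeasurableSpace Ω] {P : Measure Ω} [IsProbabilityMeasure P]
    {A X : Ω → ℕ} (hA : Measurable A) (hX : Measurable X)
    (hAX : IndepFun A X P)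
    (h0 : 0 < P {ω | A ω = 0})
    (hfix : Measure.map X P = Measure.map (fun ω => A ω * X ω + 1) P)
    (lam : ℝ) (hlam0 : 0 < lam) (hlam1 : lam < 1)
    (hpois : ∀ k : ℕ, P {ω | A ω = k} =
      ENNReal.ofReal (Real.exp (-lam) * lam ^ k / (Nat.factorial k))) :
    (∫⁻ ω, (X ω : ℝ≥0∞) ∂P) < ⊤ ∧
    lam = 1 - 1 / (∫⁻ ω, (X ω : ℝ≥0∞) ∂P).toReal := by
  lift lam to NNReal using hlam0.le
  have hA_mean : ∫⁻ ω, (A ω : ℝ≥0∞) ∂P = lam := by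
    have hA_law := hasLaw_poissonMeasure_of_forall_measure_eq hA.aemeasurable hpois
    rw [← lintegral_natCast_poissonMeasure, ← hA_law.lintegral_comp .of_discrete]
  have hfix_nat : IdentDistrib X (fun ω => A ω * X ω + 1) P P :=
    ⟨hX.aemeasurable, by fun_prop, hfix⟩
  have hfix_cast : IdentDistrib (fun ω => (X ω : ℝ≥0∞)) (fun ω => A ω * X ω + 1) P P := by
    simpa [Function.comp_def] using hfix_nat.comp (u := ((↑) : ℕ → ℝ≥0∞)) .of_discrete
  have hAX_cast : IndepFun (fun ω => (A ω : ℝ≥0∞)) (fun ω => (X ω : ℝ≥0∞)) P :=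
    hAX.comp .of_discrete .of_discrete
  simpa [hA_mean] using stmt_17_general (by fun_prop) hAX_cast
    (.of_forall fun ω => natCast_ne_top (X ω)) hfix_cast (by rw [hA_mean]; exact_mod_cast hlam1)
end
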